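/- arXiv:2402.04468 — 2 statements merged into one kernel-verified Lean document; each statement's English description precedes it below -/
import Mathlib

section
/- Let V be a finite-dimensional unital associative algebra over a field k of characteristic zero, and suppose the trace form g(x,y) := tr(L_{x*y}) (where L_a denotes left multiplication by a) is a nondegenerate bilinear form on V. Then V decomposes as an internal direct sum of vector subspaces V = [V,V] ⊕ Z(V), where [V,V] is the linear span of commutators and Z(V) is the center; i.e., these two subspaces are complementary submodules of V. -/
/-!
Write `t x = tr L_x` and `g x y = t (x * y)`, a symmetric form, and let `R_x` be right
multiplication by `x`. The functional `x ↦ tr (L_y R_x)` kills commutators, because `L_y` commutes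
with right multiplications. If `z` is central then `R_z = L_z`, so this functional takes the value
`g z y` at `z`. Hence a central `z` in `[A, A]` is orthogonal to `A`, and so `z = 0`.

To span `A`, let `f` be the `g`-dual family of a basis `b`, so that `tr φ = ∑ g (f i) (φ (b i))` for
every endomorphism `φ`. Taking `φ = L_y` gives `g (∑ b i * f i) y = t y`, so `∑ b i * f i = 1`;
taking `φ = L_x R_y` gives `g (∑ f i * x * b i) y = tr (L_x R_y)`, which makes
`∑ f i * x * b i` central. The difference `x - ∑ f i * x * b i = ∑ [x * b i, f i]` lies in `[A, A]`.
-/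

open Module

section Definitions

variable (R A : Type*) [CommRing R] [Ring A] [Algebra R A]

/-- The subspace `[A, A]` of an algebra `A`, spanned by the commutators of its elements. Unlike the
commutator ideal it is only a submodule over the base ring. -/
def commutatorSubmodule : Submodule R A :=
  Submodule.span R {c | ∃ x y : A, c = x * y - y * x}

/-- The trace form `(x, y) ↦ tr L_{x * y}` of the left regular representation. It extends
`Algebra.traceForm`, which is restricted to commutative algebras. -/
noncomputable def regularTraceForm : LinearMap.BilinForm R A :=
  (LinearMap.mul R A).compr₂ (LinearMap.trace R A ∘ₗ LinearMap.mul R A)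

end Definitions

theorem trace_eq_sum_coord {R M ι : Type*} [CommRing R] [AddCommGroup M] [Module R M] [Fintype ι]
    (b : Basis ι R M) (φ : End R M) : LinearMap.trace R M φ = ∑ i, b.coord i (φ (b i)) := by
  classical
  simp only [LinearMap.trace_eq_matrix_trace R b, Matrix.trace, Matrix.diag_apply,
    LinearMap.toMatrix_apply, Basis.coord_apply]

section CommRing

variable {R A : Type*} [CommRing R] [Ring A] [Algebra R A]

theorem regularTraceForm_apply (x y : A) :
    regularTraceForm R A x y = LinearMap.trace R A (LinearMap.mulLeft R (x * y)) :=
  rfl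

theorem regularTraceForm_mul_left (x y z : A) :
    regularTraceForm R A (x * y) z = regularTraceForm R A x (y * z) := by
  rw [regularTraceForm_apply, regularTraceForm_apply, mul_assoc]

theorem regularTraceForm_comm (x y : A) :
    regularTraceForm R A x y = regularTraceForm R A y x := by
  rw [regularTraceForm_apply, regularTraceForm_apply, LinearMap.mulLeft_mul, LinearMap.mulLeft_mul]
  exact LinearMap.trace_mul_comm R _ _

theorem trace_mulLeft_mul_mulRight_mul_comm (x y z : A) :
    LinearMap.trace R A (LinearMap.mulLeft R x * LinearMap.mulRight R (y * z)) =
      LinearMap.trace R A (LinearMap.mulLeft R x * LinearMap.mulRight R (z * y)) := by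
  calc LinearMap.trace R A (LinearMap.mulLeft R x * LinearMap.mulRight R (y * z))
    _ = LinearMap.trace R A
          (LinearMap.mulRight R z * (LinearMap.mulLeft R x * LinearMap.mulRight R y)) := by
        rw [LinearMap.mulRight_mul, ← Module.End.mul_eq_comp, ← mul_assoc,
          (LinearMap.commute_mulLeft_right x z).eq, mul_assoc]
    _ = LinearMap.trace R A
          (LinearMap.mulLeft R x * (LinearMap.mulRight R y * LinearMap.mulRight R z)) := by
        rw [LinearMap.trace_mul_comm, mul_assoc]
    _ = LinearMap.trace R A (LinearMap.mulLeft R x * LinearMap.mulRight R (z * y)) := by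
        rw [LinearMap.mulRight_mul, Module.End.mul_eq_comp (LinearMap.mulRight R y)]

theorem trace_mulLeft_mul_mulRight_eq_zero {z : A} (hz : z ∈ commutatorSubmodule R A) (y : A) :
    LinearMap.trace R A (LinearMap.mulLeft R y * LinearMap.mulRight R z) = 0 := by
  let τ : A →ₗ[R] R :=
    LinearMap.trace R A ∘ₗ LinearMap.mulLeft R (LinearMap.mulLeft R y) ∘ₗ (LinearMap.mul R A).flip
  suffices commutatorSubmodule R A ≤ LinearMap.ker τ from this hz
  refine Submodule.span_le.2 ?_
  rintro _ ⟨u, v, rfl⟩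
  rw [SetLike.mem_coe, LinearMap.mem_ker, map_sub, sub_eq_zero]
  exact trace_mulLeft_mul_mulRight_mul_comm y u v

theorem disjoint_commutatorSubmodule_center (hg : Function.Injective (regularTraceForm R A)) :
    Disjoint (commutatorSubmodule R A) (Subalgebra.center R A).toSubmodule := by
  refine Submodule.disjoint_def.2 fun z hzcomm hzcenter =>
    (map_eq_zero_iff _ hg).1 (LinearMap.ext fun y => ?_)
  have hRL : LinearMap.mulRight R z = LinearMap.mulLeft R z :=
    LinearMap.ext ((Subalgebra.mem_center_iff (R := R)).1 hzcenter)
  calc regularTraceForm R A z y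
    _ = LinearMap.trace R A (LinearMap.mulLeft R y * LinearMap.mulRight R z) := by
        rw [regularTraceForm_comm, regularTraceForm_apply, hRL, LinearMap.mulLeft_mul,
          Module.End.mul_eq_comp]
    _ = 0 := trace_mulLeft_mul_mulRight_eq_zero hzcomm y

section DualFamily

variable {ι : Type*} [Fintype ι]

theorem sub_sum_mul_mul_mem_commutatorSubmodule {b f : ι → A} (hbf : ∑ i, b i * f i = 1) (x : A) :
    x - ∑ i, f i * x * b i ∈ commutatorSubmodule R A := by
  have hx : x - ∑ i, f i * x * b i = ∑ i, (x * b i * f i - f i * (x * b i)) := by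
    simp only [Finset.sum_sub_distrib, mul_assoc, ← Finset.mul_sum, hbf, mul_one]
  rw [hx]
  exact Submodule.sum_mem _ fun i _ => Submodule.subset_span ⟨x * b i, f i, rfl⟩

variable {b : Basis ι R A} {f : ι → A}

theorem sum_mul_dual_eq_one (hg : Function.Injective (regularTraceForm R A))
    (hf : ∀ i, regularTraceForm R A (f i) = b.coord i) : ∑ i, b i * f i = 1 := by
  refine hg (LinearMap.ext fun y => ?_)
  calc regularTraceForm R A (∑ i, b i * f i) y
    _ = ∑ i, regularTraceForm R A (f i) (y * b i) := by
        simp only [map_sum, LinearMap.sum_apply]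
        refine Finset.sum_congr rfl fun i _ => ?_
        rw [regularTraceForm_mul_left, regularTraceForm_comm, regularTraceForm_mul_left]
    _ = LinearMap.trace R A (LinearMap.mulLeft R y) := by
        simp only [hf, trace_eq_sum_coord b, LinearMap.mulLeft_apply]
    _ = regularTraceForm R A 1 y := by rw [regularTraceForm_apply, one_mul]

theorem regularTraceForm_sum_dual_mul_mul (hf : ∀ i, regularTraceForm R A (f i) = b.coord i)
    (x y : A) : regularTraceForm R A (∑ i, f i * x * b i) y =
      LinearMap.trace R A (LinearMap.mulLeft R x * LinearMap.mulRight R y) := by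
  simp only [map_sum, LinearMap.sum_apply, regularTraceForm_mul_left, hf, trace_eq_sum_coord b,
    Module.End.mul_apply, LinearMap.mulLeft_apply, LinearMap.mulRight_apply]

theorem sum_dual_mul_mul_mem_center (hg : Function.Injective (regularTraceForm R A))
    (hf : ∀ i, regularTraceForm R A (f i) = b.coord i) (x : A) :
    ∑ i, f i * x * b i ∈ Subalgebra.center R A := by
  refine Subalgebra.mem_center_iff.2 fun u => hg (LinearMap.ext fun y => ?_)
  calc regularTraceForm R A (u * ∑ i, f i * x * b i) y
    _ = regularTraceForm R A (∑ i, f i * x * b i) (y * u) := by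
        rw [regularTraceForm_comm, ← regularTraceForm_mul_left, regularTraceForm_comm]
    _ = regularTraceForm R A (∑ i, f i * x * b i) (u * y) := by
        rw [regularTraceForm_sum_dual_mul_mul hf, trace_mulLeft_mul_mulRight_mul_comm,
          ← regularTraceForm_sum_dual_mul_mul hf]
    _ = regularTraceForm R A ((∑ i, f i * x * b i) * u) y :=
        (regularTraceForm_mul_left _ _ _).symm

end DualFamily

variable [Module.Free R A] [Module.Finite R A]

theorem codisjoint_commutatorSubmodule_center (hg : (regularTraceForm R A).IsPerfPair) :
    Codisjoint (commutatorSubmodule R A) (Subalgebra.center R A).toSubmodule := by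
  let b := Module.Free.chooseBasis R A
  let f := fun i => (regularTraceForm R A).toPerfPair.symm (b.coord i)
  have hf : ∀ i, regularTraceForm R A (f i) = b.coord i := fun i =>
    LinearMap.apply_symm_toPerfPair_self _ _
  have hinj : Function.Injective (regularTraceForm R A) := hg.bijective_left.injective
  refine Submodule.codisjoint_iff_exists_add_eq.2 fun x =>
    ⟨x - ∑ i, f i * x * b i, ∑ i, f i * x * b i, ?_, ?_, sub_add_cancel _ _⟩
  · exact sub_sum_mul_mul_mem_commutatorSubmodule (sum_mul_dual_eq_one hinj hf) x
  · exact sum_dual_mul_mul_mem_center hinj hf x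

theorem stmt_1_general (hg : (regularTraceForm R A).IsPerfPair) :
    IsCompl (commutatorSubmodule R A) (Subalgebra.center R A).toSubmodule :=
  ⟨disjoint_commutatorSubmodule_center hg.bijective_left.injective,
    codisjoint_commutatorSubmodule_center hg⟩

end CommRing

theorem isPerfPair_regularTraceForm {k V : Type*} [Field k] [Ring V] [Algebra k V]
    [FiniteDimensional k V] (hg : (regularTraceForm k V).SeparatingLeft) :
    (regularTraceForm k V).IsPerfPair := by
  have hinj : Function.Injective (regularTraceForm k V) :=
    LinearMap.ker_eq_bot.1 (LinearMap.separatingLeft_iff_ker_eq_bot.1 hg)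
  have hflip : (regularTraceForm k V).flip = regularTraceForm k V :=
    LinearMap.ext₂ fun x y => regularTraceForm_comm y x
  exact .of_injective hinj (hflip.symm ▸ hinj)

/-- If the trace form `g(x,y) = tr(L_{x*y})` of a finite-dimensional unital associative
algebra `V` over a field of characteristic zero is nondegenerate, then
`V = [V,V] ⊕ Z(V)` as an internal direct sum of vector subspaces. -/
theorem stmt_1 (k V : Type*) [Field k] [CharZero k] [Ring V] [Algebra k V]
    [FiniteDimensional k V]
    (hnondeg : ∀ x : V,
      (∀ y : V, LinearMap.trace k V (LinearMap.mulLeft k (x * y)) = 0) → x = 0) :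
    IsCompl (Submodule.span k {c : V | ∃ x y : V, c = x * y - y * x})
      (Subalgebra.center k V).toSubmodule :=
  stmt_1_general (isPerfPair_regularTraceForm hnondeg)
end

section
/- Let V be a finite-dimensional unital associative algebra over a field k of characteristic zero such that the trace form g(x,y) := tr(L_{x*y}) is nondegenerate. Define γ(x,y) := tr of the linear endomorphism z ↦ x*z*y of V. Then for x ∈ V one has γ(x,y) = 0 for all y ∈ V if and only if x lies in the linear span of commutators [V,V]; i.e., the kernel (radical) of the bilinear form γ is exactly [V,V]. -/
/-!
Write `t(x) = tr(L_x)`, a linear functional with `t(ab) = t(ba)`. For such a functional,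
`t((ab - ba)w) = t((wa - aw)b)`, so when `(x, y) ↦ t(xy)` is nondegenerate the orthogonal
complement of `[V,V]` is the center `Z`, and in finite dimension `Z^⊥ = [V,V]`.

Commutators lie in the radical of `γ` because left and right multiplications commute. Conversely,
`L_w = R_w` for central `w`, so `γ(x, w) = t(xw)` and the radical of `γ` is contained in `Z^⊥`.
-/

open LinearMap (BilinForm mulLeft mulRight)

section CommRing

variable (R A : Type*) [CommRing R] [Ring A] [Algebra R A]

/-- The commutator subspace `[A, A]`: the linear span of the commutators, as opposed to the
two-sided ideal they generate. -/
def commutatorSpan : Submodule R A :=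
  Submodule.span R {c : A | ∃ a b : A, c = a * b - b * a}

/-- The regular trace `x ↦ tr(L_x)`; unlike `Algebra.trace`, it does not require `A` to be
commutative. -/
noncomputable def leftTrace : A →ₗ[R] R :=
  LinearMap.trace R A ∘ₗ LinearMap.mul R A

/-- The bilinear form `γ(x, y) = tr(z ↦ x * z * y)`. -/
noncomputable def sandwichTraceForm : BilinForm R A :=
  ((LinearMap.mul R (Module.End R A)).compr₂ (LinearMap.trace R A)).compl₁₂
    (LinearMap.mul R A) (LinearMap.mul R A).flip

variable {R A}

/-- The associative bilinear form `(x, y) ↦ f (x * y)` of a linear functional `f`. For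
`f = leftTrace R A` this is the trace form. -/
def mulForm (f : A →ₗ[R] R) : BilinForm R A :=
  (LinearMap.mul R A).compr₂ f

theorem mulForm_apply (f : A →ₗ[R] R) (x y : A) : mulForm f x y = f (x * y) :=
  rfl

theorem leftTrace_apply (x : A) : leftTrace R A x = LinearMap.trace R A (mulLeft R x) :=
  rfl

theorem sandwichTraceForm_apply (x y : A) :
    sandwichTraceForm R A x y = LinearMap.trace R A (mulLeft R x * mulRight R y) :=
  rfl

theorem leftTrace_mul_comm (a b : A) : leftTrace R A (a * b) = leftTrace R A (b * a) := by
  simp only [leftTrace_apply, LinearMap.mulLeft_mul, ← Module.End.mul_eq_comp]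
  exact LinearMap.trace_mul_comm R (mulLeft R a) (mulLeft R b)

variable {f : A →ₗ[R] R}

theorem mulForm_isSymm (hf : ∀ a b, f (a * b) = f (b * a)) :
    (mulForm f).IsSymm :=
  ⟨hf⟩

theorem mulForm_commutator_left (hf : ∀ a b, f (a * b) = f (b * a)) (a b w : A) :
    mulForm f (a * b - b * a) w = mulForm f (w * a - a * w) b := by
  simp only [map_sub, LinearMap.sub_apply, mulForm_apply]
  rw [hf (a * b) w, mul_assoc b a w, hf b (a * w), mul_assoc w a b]

theorem mulForm_orthogonal_commutatorSpan (hf : ∀ a b, f (a * b) = f (b * a))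
    (hsep : (mulForm f).SeparatingLeft) :
    (mulForm f).orthogonal (commutatorSpan R A) = (Subalgebra.center R A).toSubmodule := by
  ext w
  rw [BilinForm.mem_orthogonal_iff, Subalgebra.mem_toSubmodule, Subalgebra.mem_center_iff]
  constructor
  · intro hw a
    have hzero : w * a - a * w = 0 := hsep _ fun b => by
      rw [← mulForm_commutator_left hf]
      exact hw _ (Submodule.subset_span ⟨a, b, rfl⟩)
    exact (sub_eq_zero.mp hzero).symm
  · intro hw
    have hle : commutatorSpan R A ≤ LinearMap.ker ((mulForm f).flip w) := by
      refine Submodule.span_le.mpr ?_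
      rintro _ ⟨a, b, rfl⟩
      rw [SetLike.mem_coe, LinearMap.mem_ker, BilinForm.flip_apply, mulForm_commutator_left hf,
        hw a, sub_self, map_zero, LinearMap.zero_apply]
    exact fun c hc => hle hc

theorem sandwichTraceForm_mul_comm_left (a b y : A) :
    sandwichTraceForm R A (a * b) y = sandwichTraceForm R A (b * a) y := by
  simp only [sandwichTraceForm_apply, LinearMap.mulLeft_mul, ← Module.End.mul_eq_comp]
  calc
    LinearMap.trace R A (mulLeft R a * mulLeft R b * mulRight R y)
      = LinearMap.trace R A (mulLeft R a * (mulRight R y * mulLeft R b)) := by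
        rw [mul_assoc, (LinearMap.commute_mulLeft_right b y).eq]
    _ = LinearMap.trace R A (mulLeft R b * mulLeft R a * mulRight R y) := by
        rw [LinearMap.trace_mul_cycle', mul_assoc]

theorem commutatorSpan_le_ker_sandwichTraceForm :
    commutatorSpan R A ≤ LinearMap.ker (sandwichTraceForm R A) := by
  refine Submodule.span_le.mpr ?_
  rintro _ ⟨a, b, rfl⟩
  rw [SetLike.mem_coe, LinearMap.mem_ker, map_sub, sub_eq_zero]
  exact LinearMap.ext (sandwichTraceForm_mul_comm_left a b)

theorem sandwichTraceForm_apply_of_mem_center (x : A) {w : A} (hw : w ∈ Subalgebra.center R A) :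
    sandwichTraceForm R A x w = mulForm (leftTrace R A) x w := by
  have hmul : mulRight R w = mulLeft R w :=
    LinearMap.ext (Subalgebra.mem_center_iff.mp hw)
  rw [sandwichTraceForm_apply, hmul, mulForm_apply, leftTrace_apply, LinearMap.mulLeft_mul,
    Module.End.mul_eq_comp]

theorem ker_sandwichTraceForm_le_mulForm_orthogonal_center :
    LinearMap.ker (sandwichTraceForm R A) ≤
      (mulForm (leftTrace R A)).orthogonal (Subalgebra.center R A).toSubmodule := by
  intro x hx w hw
  rw [(mulForm_isSymm leftTrace_mul_comm).eq, ← sandwichTraceForm_apply_of_mem_center x hw,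
    LinearMap.mem_ker.mp hx, LinearMap.zero_apply]

end CommRing

theorem mulForm_orthogonal_center {k V : Type*} [Field k] [Ring V] [Algebra k V]
    [FiniteDimensional k V] {f : V →ₗ[k] k} (hf : ∀ a b, f (a * b) = f (b * a))
    (hsep : (mulForm f).SeparatingLeft) :
    (mulForm f).orthogonal (Subalgebra.center k V).toSubmodule = commutatorSpan k V := by
  have hrefl : (mulForm f).IsRefl := (mulForm_isSymm hf).isRefl
  rw [← mulForm_orthogonal_commutatorSpan hf hsep]
  exact BilinForm.orthogonal_orthogonal (hrefl.nondegenerate_iff_separatingLeft.mpr hsep) hrefl _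

theorem stmt_4_general (k V : Type*) [Field k] [Ring V] [Algebra k V] [FiniteDimensional k V]
    (hsep : (mulForm (leftTrace k V)).SeparatingLeft) :
    LinearMap.ker (sandwichTraceForm k V) = commutatorSpan k V := by
  refine le_antisymm ?_ commutatorSpan_le_ker_sandwichTraceForm
  rw [← mulForm_orthogonal_center leftTrace_mul_comm hsep]
  exact ker_sandwichTraceForm_le_mulForm_orthogonal_center

/-- If the trace form of a finite-dimensional unital associative algebra `V` over a field
of characteristic zero is nondegenerate, then the radical of the pairing
`γ(x,y) = tr(z ↦ x*z*y)` is exactly the commutator subspace `[V,V]`. -/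
theorem stmt_4 (k V : Type*) [Field k] [CharZero k] [Ring V] [Algebra k V]
    [FiniteDimensional k V]
    (hnondeg : ∀ x : V,
      (∀ y : V, LinearMap.trace k V (LinearMap.mulLeft k (x * y)) = 0) → x = 0) :
    ∀ x : V,
      (∀ y : V,
        LinearMap.trace k V (LinearMap.mulLeft k x ∘ₗ LinearMap.mulRight k y) = 0) ↔
      x ∈ Submodule.span k {c : V | ∃ a b : V, c = a * b - b * a} := by
  intro x
  rw [← commutatorSpan, ← stmt_4_general k V hnondeg, LinearMap.mem_ker, LinearMap.ext_iff]
  rfl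
end
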